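/- arXiv:1304.3956 — 4 statements merged into one kernel-verified Lean document; each statement's English description precedes it below -/
import Mathlib

section
/- Let m ≥ 1 and μ₁,…,μ_m ∈ ℂ, and let f = X₁⋯X_m·(μ₁X₁ + ⋯ + μ_mX_m) ∈ ℂ[X₁,…,X_m]. Then for every n ≥ 1, 𝓛(f^n) = n! · ∑ (∏_{i=1}^m (n+j_i)!/j_i!) · μ₁^{j₁}⋯μ_m^{j_m}, the sum running over all (j₁,…,j_m) ∈ ℕ^m with j₁ + ⋯ + j_m = n. Equivalently, 𝓛(f^n) = (n!)^{m+1}·u_n, where u_n is the n-th coefficient sequence of the multiplicative inversion formula for X(1−μ₁X)⋯(1−μ_mX). -/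
open MvPolynomial

/-- The factorial map `𝓛 : ℂ[X₁,…,X_m] → ℂ`, defined on monomials by
`𝓛(X₁^{l₁}⋯X_m^{l_m}) = l₁!⋯l_m!`. -/
noncomputable def factMap (m : ℕ) (f : MvPolynomial (Fin m) ℂ) : ℂ :=
  ∑ d ∈ f.support, f.coeff d * ∏ i, ((d i).factorial : ℂ)

/-!
In `X^a · (∑ μ i X i)^n`, expand the power of the linear form by the multinomial theorem. On the
term of exponent `j` the factor `∏ (a i + j i)!` produced by `𝓛` meets the multinomial coefficient
`n! / ∏ (j i)!`, which leaves `n!` times the product of the rising factorials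
`(a i + j i)! / (j i)!`. The power `f^n` is the case where every `a i` equals `n`.
-/

open Finset
open scoped Nat

theorem multinomial_mul_prod_factorial_add {ι : Type*} (s : Finset ι) (a j : ι → ℕ) :
    Nat.multinomial s j * ∏ i ∈ s, (a i + j i)! =
      (∑ i ∈ s, j i)! * ∏ i ∈ s, (j i + 1).ascFactorial (a i) := by
  simp only [add_comm (a _), ← Nat.factorial_mul_ascFactorial, prod_mul_distrib,
    ← Nat.multinomial_spec s j]
  ring

theorem cast_ascFactorial_eq_factorial_div {K : Type*} [DivisionSemiring K] [CharZero K]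
    (n k : ℕ) : ((k + 1).ascFactorial n : K) = ((n + k)! : K) / (k ! : K) := by
  rw [eq_div_iff (Nat.cast_ne_zero.mpr k.factorial_ne_zero), add_comm n k,
    ← Nat.factorial_mul_ascFactorial, mul_comm, Nat.cast_mul]

theorem filter_piFinset_range_eq_piAntidiag {ι : Type*} [Fintype ι] [DecidableEq ι] (n : ℕ) :
    (Fintype.piFinset fun _ : ι => range (n + 1)).filter (fun j => ∑ i, j i = n) =
      piAntidiag univ n := by
  ext j
  simp only [mem_filter, Fintype.mem_piFinset, mem_range, Nat.lt_succ_iff, mem_piAntidiag,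
    mem_univ, implies_true, and_true, and_iff_right_iff_imp]
  rintro rfl i
  exact single_le_sum_of_canonicallyOrdered (mem_univ i)

section FactorialFunctional

variable {σ R : Type*} [Fintype σ] [CommSemiring R]

/-- The factorial map `𝓛` in finitely many variables over any commutative semiring, as the linear
functional sending the monomial with exponent `d` to `∏ i, (d i)!`. -/
noncomputable def factorialFunctional : MvPolynomial σ R →ₗ[R] R :=
  (basisMonomials σ R).constr R fun d => ((∏ i, (d i)! : ℕ) : R)

theorem factorialFunctional_monomial (d : σ →₀ ℕ) (c : R) :
    factorialFunctional (monomial d c) = c * (∏ i, (d i)! : ℕ) := by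
  have unit_coeff : factorialFunctional (monomial d (1 : R)) = (∏ i, (d i)! : ℕ) :=
    (basisMonomials σ R).constr_basis R _ d
  have monomial_eq_smul : monomial d c = c • monomial d (1 : R) := by
    rw [smul_monomial, smul_eq_mul, mul_one]
  rw [monomial_eq_smul, map_smul, unit_coeff, smul_eq_mul]

theorem factMap_eq_factorialFunctional (m : ℕ) (p : MvPolynomial (Fin m) ℂ) :
    factMap m p = factorialFunctional p := by
  conv_rhs => rw [p.as_sum, map_sum]
  simp only [factMap, factorialFunctional_monomial, Nat.cast_prod]

theorem prod_X_pow_eq_monomial_equivFunOnFinite (a : σ → ℕ) :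
    ∏ i, (X i : MvPolynomial σ R) ^ a i = monomial (Finsupp.equivFunOnFinite.symm a) 1 := by
  rw [monomial_eq, Finsupp.prod_fintype _ _ fun _ => pow_zero _, C_1, one_mul]
  rfl

variable [DecidableEq σ]

theorem sum_C_mul_X_pow_eq_sum_monomial (μ : σ → R) (n : ℕ) :
    (∑ i, C (μ i) * X i) ^ n =
      ∑ j ∈ piAntidiag univ n, monomial (Finsupp.equivFunOnFinite.symm j)
        (Nat.multinomial univ j * ∏ i, μ i ^ j i) := by
  rw [sum_pow_eq_sum_piAntidiag]
  refine sum_congr rfl fun j _ => ?_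
  rw [← mul_one (_ * ∏ i, μ i ^ j i), ← C_mul_monomial,
    ← prod_X_pow_eq_monomial_equivFunOnFinite]
  simp only [mul_pow, prod_mul_distrib, map_mul, map_prod, map_pow, map_natCast, mul_assoc]

theorem factorialFunctional_monomial_mul_sum_pow (a : σ →₀ ℕ) (μ : σ → R) (n : ℕ) :
    factorialFunctional (monomial a 1 * (∑ i, C (μ i) * X i) ^ n) =
      n ! * ∑ j ∈ piAntidiag univ n,
        (∏ i, ((j i + 1).ascFactorial (a i) : R)) * ∏ i, μ i ^ j i := by
  rw [sum_C_mul_X_pow_eq_sum_monomial, mul_sum, map_sum, mul_sum]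
  refine sum_congr rfl fun j hj => ?_
  have sum_j : ∑ i, j i = n := (mem_piAntidiag.mp hj).1
  calc factorialFunctional (monomial a 1 * monomial (Finsupp.equivFunOnFinite.symm j)
          (Nat.multinomial univ j * ∏ i, μ i ^ j i : R))
      = (Nat.multinomial univ j * ∏ i, (a i + j i)! : ℕ) * ∏ i, μ i ^ j i := by
        rw [monomial_mul, one_mul, factorialFunctional_monomial, mul_right_comm, Nat.cast_mul]
        rfl
    _ = n ! * ((∏ i, ((j i + 1).ascFactorial (a i) : R)) * ∏ i, μ i ^ j i) := by
        rw [multinomial_mul_prod_factorial_add, sum_j, Nat.cast_mul, Nat.cast_prod, mul_assoc]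

theorem stmt_7_general (μ : σ → R) (n : ℕ) :
    factorialFunctional (((∏ i, X i) * ∑ i, C (μ i) * X i) ^ n) =
      n ! * ∑ j ∈ piAntidiag univ n,
        (∏ i, ((j i + 1).ascFactorial n : R)) * ∏ i, μ i ^ j i := by
  rw [mul_pow, ← prod_pow, prod_X_pow_eq_monomial_equivFunOnFinite fun _ => n]
  exact factorialFunctional_monomial_mul_sum_pow _ μ n

end FactorialFunctional

theorem stmt_7 (m : ℕ) (hm : 1 ≤ m) (μ : Fin m → ℂ)
    (f : MvPolynomial (Fin m) ℂ)
    (hf : f = (∏ i : Fin m, X i) * (∑ i : Fin m, C (μ i) * X i)) :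
    ∀ n : ℕ, 1 ≤ n →
      factMap m (f ^ n) =
        (n.factorial : ℂ) *
          ∑ j ∈ (Fintype.piFinset fun _ : Fin m => Finset.range (n + 1)).filter
              (fun j : Fin m → ℕ => ∑ i : Fin m, j i = n),
            (∏ i : Fin m, (((n + j i).factorial : ℂ) / ((j i).factorial : ℂ))) *
              ∏ i : Fin m, μ i ^ j i := by
  rintro n -
  simp only [hf, factMap_eq_factorialFunctional, stmt_7_general,
    filter_piFinset_range_eq_piAntidiag, cast_ascFactorial_eq_factorial_div]
end

section
/- (R(2)) Let α₁, α₂ ∈ ℂ and for each integer k ≥ 1 set u_k = (1/k!) · ∑_{j₁ + 2j₂ = k, j₁,j₂ ≥ 0} ((k + j₁ + j₂)! / (j₁!·j₂!)) · α₁^{j₁} α₂^{j₂}. If there exists n ≥ 1 with u_n = u_{n+1} = 0, then α₁ = α₂ = 0. -/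
/-!
The numbers `u k` satisfy the three-term recurrence
`(k + 1) (k + 2) (a² + 4 b) u (k + 2)
  = (k + 1) (2 k + 3) a (2 a² + 9 b) u (k + 1) + 3 (3 k + 2) (3 k + 4) b² u k`.
Give `a` weight `1` and `b` weight `2`: both sides are then isobaric of weight `k + 4`. At each
monomial `a ^ i * b ^ j` every one of `a² u (k + 2)`, `b u (k + 2)`, `a³ u (k + 1)`,
`a b u (k + 1)`, `b² u k` contributes, after its prefactor in `k`, a polynomial multiple of the same
quotient of factorials, so the recurrence is a polynomial identity in `i` and `j`.

If `b ≠ 0`, the coefficient of `u k` does not vanish, hence two consecutive zeros descend to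
`u 0 = 0`, whereas `u 0 = 1`. If `b = 0`, then `u n` is a central binomial coefficient times
`a ^ n`.
-/

open Finset
open scoped Nat

/-- The exponents `(i, j)` of the monomials `a ^ i * b ^ j` of weight `k`, where `a` has weight `1`
and `b` has weight `2`. The bounding box is the one in the formula for `u k`. -/
def weightedPairs (k : ℕ) : Finset (ℕ × ℕ) :=
  (range (k + 1) ×ˢ range (k + 1)).filter (fun p : ℕ × ℕ => p.1 + 2 * p.2 = k)

lemma mem_weightedPairs {k : ℕ} {p : ℕ × ℕ} : p ∈ weightedPairs k ↔ p.1 + 2 * p.2 = k := by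
  simp only [weightedPairs, mem_filter, mem_product, mem_range]
  omega

lemma sum_weightedPairs_add {M : Type*} [AddCommMonoid M] (f : ℕ × ℕ → M) (m s t : ℕ)
    (hf : ∀ i j, i < s ∨ j < t → f (i, j) = 0) :
    ∑ p ∈ weightedPairs m, f (p.1 + s, p.2 + t) = ∑ p ∈ weightedPairs (m + s + 2 * t), f p := by
  refine sum_of_injOn (fun p ↦ (p.1 + s, p.2 + t)) ?_ ?_ ?_ fun _ _ ↦ rfl
  · rintro ⟨i, j⟩ - ⟨i', j'⟩ - h
    simp only [Prod.mk.injEq] at h ⊢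
    omega
  · rintro ⟨i, j⟩ h
    simp only [mem_coe, mem_weightedPairs] at h ⊢
    omega
  · rintro ⟨i, j⟩ h not_shifted
    refine hf i j ?_
    by_contra! hst
    refine not_shifted ⟨(i - s, j - t), ?_, by ext <;> simp [hst]⟩
    simp only [mem_coe, mem_weightedPairs] at h ⊢
    omega

lemma cast_descFactorial_three {R : Type*} [CommRing R] (n : ℕ) :
    (n.descFactorial 3 : R) = n * (n - 1) * (n - 2) := by
  rw [← descPochhammer_eval_eq_descFactorial]
  simp [descPochhammer_succ_eval]

variable {K : Type*} [Field K]

/-- The number `u k` of the additive inversion formula: `u k / (k + 1)` is the coefficient of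
`X ^ (k + 1)` in the compositional inverse of `X * (1 - (a * X + b * X ^ 2))`. The case
`k = 0`, where the descent ends, is included. -/
def inversionNumber (a b : K) (k : ℕ) : K :=
  1 / (k ! : K) * ∑ p ∈ weightedPairs k,
    ((k + p.1 + p.2)! : K) / ((p.1 ! : K) * (p.2 ! : K)) * a ^ p.1 * b ^ p.2

lemma inversionNumber_zero (a b : K) : inversionNumber a b 0 = 1 := by
  have : weightedPairs 0 = {(0, 0)} := rfl
  simp [inversionNumber, this]

section CharZero

variable [CharZero K]

lemma inversionNumber_zero_right (a : K) (n : ℕ) :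
    inversionNumber a 0 n = n.centralBinom * a ^ n := by
  rw [inversionNumber, sum_eq_single_of_mem (n, 0) (mem_weightedPairs.2 (by simp))]
  · rw [Nat.centralBinom_eq_two_mul_choose, two_mul, Nat.cast_add_choose]
    simp only [add_zero, Nat.factorial_zero, Nat.cast_one, mul_one, pow_zero]
    ring
  · rintro ⟨i, j⟩ hp hne
    have hj : j ≠ 0 := by
      rintro rfl
      simp_all [mem_weightedPairs]
    simp [hj]

lemma cast_add_descFactorial_div_factorial (n s : ℕ) :
    ((n + s).descFactorial s : K) / ((n + s)! : K) = 1 / (n ! : K) := by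
  have h := Nat.factorial_mul_descFactorial (Nat.le_add_left s n)
  rw [Nat.add_sub_cancel] at h
  rw [div_eq_div_iff (Nat.cast_ne_zero.2 (Nat.factorial_ne_zero _))
    (Nat.cast_ne_zero.2 (Nat.factorial_ne_zero _)), one_mul, mul_comm]
  exact_mod_cast h

/-- The coefficient of `a ^ i * b ^ j` in `a ^ s * b ^ t * u m`, for `i + 2 * j = m + s + 2 * t`.
The descending factorials make it vanish when `i < s` or `j < t`, hence wherever the subtraction
truncates. -/
def shiftedCoeff (K : Type*) [Field K] (m s t i j : ℕ) : K :=
  ((m + i + j - s - t)! : K) / (m ! : K) *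
    ((i.descFactorial s : K) / (i ! : K)) * ((j.descFactorial t : K) / (j ! : K))

lemma pow_mul_pow_mul_inversionNumber (a b : K) {m s t w : ℕ} (hw : m + s + 2 * t = w) :
    a ^ s * b ^ t * inversionNumber a b m =
      ∑ p ∈ weightedPairs w, shiftedCoeff K m s t p.1 p.2 * (a ^ p.1 * b ^ p.2) := by
  rw [← hw, ← sum_weightedPairs_add, inversionNumber, mul_sum, mul_sum]
  · refine sum_congr rfl fun p _ ↦ ?_
    have hsub : m + (p.1 + s) + (p.2 + t) - s - t = m + p.1 + p.2 := by omega
    rw [shiftedCoeff, hsub, cast_add_descFactorial_div_factorial,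
      cast_add_descFactorial_div_factorial]
    ring
  · rintro i j (hi | hj)
    · simp [shiftedCoeff, Nat.descFactorial_of_lt hi]
    · simp [shiftedCoeff, Nat.descFactorial_of_lt hj]

lemma ascFactorial_mul_shiftedCoeff {k l N r s t i j : ℕ} (h : k + l + i + j - s - t = N + r) :
    ((k + 1).ascFactorial l : K) * shiftedCoeff K (k + l) s t i j =
      (N + 1).ascFactorial r * i.descFactorial s * j.descFactorial t *
        ((N ! : K) / (k ! * i ! * j !)) := by
  have hl : ((k + 1).ascFactorial l : K) ≠ 0 := Nat.cast_ne_zero.2 (Nat.ascFactorial_pos _ _).ne'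
  rw [shiftedCoeff, h, ← Nat.factorial_mul_ascFactorial k, ← Nat.factorial_mul_ascFactorial N]
  push_cast
  field_simp

lemma shiftedCoeff_recurrence {k i j : ℕ} (hij : i + 2 * j = k + 4) :
    (k + 1) * (k + 2) * (shiftedCoeff K (k + 2) 2 0 i j + 4 * shiftedCoeff K (k + 2) 0 1 i j) =
      (k + 1) * (2 * k + 3) *
          (2 * shiftedCoeff K (k + 1) 3 0 i j + 9 * shiftedCoeff K (k + 1) 1 1 i j) +
        3 * (3 * k + 2) * (3 * k + 4) * shiftedCoeff K k 0 2 i j := by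
  obtain ⟨N, hN⟩ : ∃ N, k + i + j = N + 2 := ⟨k + i + j - 2, by omega⟩
  have h_aa := ascFactorial_mul_shiftedCoeff (K := K)
    (by omega : k + 2 + i + j - 2 - 0 = N + 2)
  have h_b := ascFactorial_mul_shiftedCoeff (K := K)
    (by omega : k + 2 + i + j - 0 - 1 = N + 3)
  have h_aaa := ascFactorial_mul_shiftedCoeff (K := K)
    (by omega : k + 1 + i + j - 3 - 0 = N + 0)
  have h_ab := ascFactorial_mul_shiftedCoeff (K := K)
    (by omega : k + 1 + i + j - 1 - 1 = N + 1)
  have h_bb := ascFactorial_mul_shiftedCoeff (K := K)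
    (by omega : k + 0 + i + j - 0 - 2 = N + 0)
  simp only [Nat.ascFactorial_succ, Nat.ascFactorial_zero, Nat.descFactorial_zero,
    Nat.descFactorial_one, Nat.cast_descFactorial_two, cast_descFactorial_three, add_zero]
    at h_aa h_b h_aaa h_ab h_bb
  push_cast at h_aa h_b h_aaa h_ab h_bb
  have hk_cast : (k : K) = i + 2 * j - 4 := by
    rw [eq_sub_iff_add_eq]
    exact_mod_cast hij.symm
  have hN_cast : (N : K) = 2 * i + 3 * j - 6 := by
    rw [eq_sub_iff_add_eq]
    exact_mod_cast (by omega : N + 6 = 2 * i + 3 * j)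
  have polynomial_identity :
      ((N : K) + 2) * (N + 1) * (i * (i - 1)) + 4 * ((N + 3) * (N + 2) * (N + 1) * j) =
        (2 * k + 3) * (2 * (i * (i - 1) * (i - 2)) + 9 * ((N + 1) * i * j)) +
          3 * (3 * k + 2) * (3 * k + 4) * (j * (j - 1)) := by
    rw [hk_cast, hN_cast]
    ring
  linear_combination h_aa + 4 * h_b - 2 * (2 * (k : K) + 3) * h_aaa -
    9 * (2 * (k : K) + 3) * h_ab - 3 * (3 * (k : K) + 2) * (3 * k + 4) * h_bb +
    (N ! : K) / (k ! * i ! * j !) * polynomial_identity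

lemma inversionNumber_recurrence (a b : K) (k : ℕ) :
    (k + 1) * (k + 2) * (a ^ 2 + 4 * b) * inversionNumber a b (k + 2) =
      (k + 1) * (2 * k + 3) * (a * (2 * a ^ 2 + 9 * b)) * inversionNumber a b (k + 1) +
        3 * (3 * k + 2) * (3 * k + 4) * b ^ 2 * inversionNumber a b k := by
  suffices (k + 1) * (k + 2) * (a ^ 2 * b ^ 0 * inversionNumber a b (k + 2) +
        4 * (a ^ 0 * b ^ 1 * inversionNumber a b (k + 2))) =
      (k + 1) * (2 * k + 3) * (2 * (a ^ 3 * b ^ 0 * inversionNumber a b (k + 1)) +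
          9 * (a ^ 1 * b ^ 1 * inversionNumber a b (k + 1))) +
        3 * (3 * k + 2) * (3 * k + 4) * (a ^ 0 * b ^ 2 * inversionNumber a b k) by
    linear_combination this
  rw [pow_mul_pow_mul_inversionNumber a b (by ring : k + 2 + 2 + 2 * 0 = k + 4),
    pow_mul_pow_mul_inversionNumber a b (by ring : k + 2 + 0 + 2 * 1 = k + 4),
    pow_mul_pow_mul_inversionNumber a b (by ring : k + 1 + 3 + 2 * 0 = k + 4),
    pow_mul_pow_mul_inversionNumber a b (by ring : k + 1 + 1 + 2 * 1 = k + 4),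
    pow_mul_pow_mul_inversionNumber a b (by ring : k + 0 + 2 * 2 = k + 4)]
  simp only [mul_sum, ← sum_add_distrib]
  refine sum_congr rfl fun p hp ↦ ?_
  linear_combination
    a ^ p.1 * b ^ p.2 * shiftedCoeff_recurrence (K := K) (mem_weightedPairs.1 hp)

lemma inversionNumber_succ_ne_zero {a b : K} (hb : b ≠ 0) {n : ℕ}
    (hn : inversionNumber a b n = 0) : inversionNumber a b (n + 1) ≠ 0 := by
  induction n with
  | zero => simp [inversionNumber_zero] at hn
  | succ k ih =>
    intro hn'
    have hk : 3 * (3 * k + 2) * (3 * k + 4) * b ^ 2 * inversionNumber a b k = 0 := by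
      simpa [hn, hn'] using (inversionNumber_recurrence a b k).symm
    have hcoeff : 3 * (3 * (k : K) + 2) * (3 * k + 4) * b ^ 2 ≠ 0 := by
      have h₂ : 3 * (k : K) + 2 ≠ 0 := by norm_cast
      have h₄ : 3 * (k : K) + 4 ≠ 0 := by norm_cast
      simp [h₂, h₄, hb]
    exact ih ((mul_eq_zero.1 hk).resolve_left hcoeff) hn

theorem stmt_12_general {a b : K} {n : ℕ} (h₀ : inversionNumber a b n = 0)
    (h₁ : inversionNumber a b (n + 1) = 0) : a = 0 ∧ b = 0 := by
  obtain rfl : b = 0 := by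
    by_contra hb
    exact inversionNumber_succ_ne_zero hb h₀ h₁
  rw [inversionNumber_zero_right, mul_eq_zero, Nat.cast_eq_zero] at h₀
  exact ⟨eq_zero_of_pow_eq_zero (h₀.resolve_left n.centralBinom_ne_zero), rfl⟩

end CharZero

theorem stmt_12 (α₁ α₂ : ℂ) (u : ℕ → ℂ)
    (hu : ∀ k : ℕ, 1 ≤ k →
      u k = (1 / (k.factorial : ℂ)) *
        ∑ p ∈ (Finset.range (k + 1) ×ˢ Finset.range (k + 1)).filter
            (fun p : ℕ × ℕ => p.1 + 2 * p.2 = k),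
          (((k + p.1 + p.2).factorial : ℂ) /
              ((p.1.factorial : ℂ) * (p.2.factorial : ℂ))) * α₁ ^ p.1 * α₂ ^ p.2)
    (h : ∃ n : ℕ, 1 ≤ n ∧ u n = 0 ∧ u (n + 1) = 0) :
    α₁ = 0 ∧ α₂ = 0 := by
  obtain ⟨n, hn, h₀, h₁⟩ := h
  exact stmt_12_general ((hu n hn).symm.trans h₀) ((hu (n + 1) (by omega)).symm.trans h₁)
end

section
/- For each n ∈ ℕ let P_n(X) = ∑_{0 ≤ k ≤ ⌊n/2⌋} ((2n−k)! / ((n−2k)!·k!)) X^k ∈ ℂ[X]. Then for every n ∈ ℕ the recurrence −3(3n+4)(3n+2)·X²·P_n(X) − (2n+3)(9X+2)·P_{n+1}(X) + (4X+1)·P_{n+2}(X) = 0 holds. -/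
open Polynomial

/-- `P n = ∑_{0 ≤ k ≤ ⌊n/2⌋} ((2n−k)! / ((n−2k)!·k!)) Xᵏ ∈ ℂ[X]`. -/
noncomputable def P (n : ℕ) : Polynomial ℂ :=
  ∑ k ∈ Finset.range (n / 2 + 1),
    C (((2 * n - k).factorial : ℂ) /
        (((n - 2 * k).factorial : ℂ) * (k.factorial : ℂ))) * X ^ k

/-!
The five coefficients of `X ^ k` in the recurrence are polynomial multiples of the single quantity
`(2n+2-k)! / ((n+4-2k)! k!)`, and they all vanish when `n + 4 < 2k`. The multipliers contain falling
factorials of `n+4-2k` and of `k`, which are zero exactly when the corresponding coefficient falls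
outside the support of `P`; hence there are no boundary cases for small `k` or for `k` close to
`n/2`, and the recurrence reduces to one polynomial identity in `n` and `k`.
-/

lemma descFactorial_div_factorial {K : Type*} [Semifield K] [CharZero K] {n k : ℕ} (h : k ≤ n) :
    (n.descFactorial k : K) / n.factorial = 1 / (n - k).factorial := by
  rw [div_eq_div_iff (by exact_mod_cast n.factorial_ne_zero)
    (by exact_mod_cast (n - k).factorial_ne_zero), one_mul, mul_comm]
  exact_mod_cast Nat.factorial_mul_descFactorial h

lemma coeff_P (n k : ℕ) :
    (P n).coeff k =
      if 2 * k ≤ n then ((2 * n - k).factorial : ℂ) / ((n - 2 * k).factorial * k.factorial)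
      else 0 := by
  have mem_range_iff : k < n / 2 + 1 ↔ 2 * k ≤ n := by omega
  simp only [P, finsetSum_coeff, coeff_C_mul_X_pow, Finset.sum_ite_eq, Finset.mem_range,
    mem_range_iff]

lemma coeff_X_pow_mul_P_eq_zero {n i k : ℕ} (h : n + 2 * i < 2 * k) :
    (X ^ i * P n).coeff k = 0 := by
  rw [coeff_X_pow_mul', if_pos (by omega), coeff_P, if_neg (by omega)]

lemma coeff_X_pow_mul_P {n i k N a m j : ℕ} (hN : N + a + k = 2 * n + i)
    (hm : m + 2 * k = n + 2 * i + j) :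
    (X ^ i * P n).coeff k = (N.factorial : ℂ) / (m.factorial * k.factorial) *
      ((N + 1).ascFactorial a * m.descFactorial j * k.descFactorial i) := by
  rcases lt_or_ge k i with hki | hik
  · simp [coeff_X_pow_mul', Nat.descFactorial_of_lt hki, hki.not_ge]
  rcases lt_or_ge m j with hmj | hjm
  · simp [coeff_X_pow_mul_P_eq_zero (show n + 2 * i < 2 * k by omega),
      Nat.descFactorial_of_lt hmj]
  calc (X ^ i * P n).coeff k
      = ((N + a).factorial : ℂ) / ((m - j).factorial * (k - i).factorial) := by
        rw [coeff_X_pow_mul', if_pos hik, coeff_P, if_pos (by omega),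
          show 2 * n - (k - i) = N + a by omega, show n - 2 * (k - i) = m - j by omega]
    _ = (N + a).factorial * (1 / (m - j).factorial) * (1 / (k - i).factorial) := by ring
    _ = N.factorial * (N + 1).ascFactorial a * (m.descFactorial j / m.factorial) *
          (k.descFactorial i / k.factorial) := by
        rw [descFactorial_div_factorial hjm, descFactorial_div_factorial hik,
          ← Nat.factorial_mul_ascFactorial, Nat.cast_mul]
    _ = _ := by ring

lemma exists_forall_coeff_X_pow_mul_P_eq (n k : ℕ) :
    ∃ c : ℂ, ∀ l i a j : ℕ, 2 * l + i = 2 * n + 2 + a → l + 2 * i + j = n + 4 →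
      (X ^ i * P l).coeff k =
        c * ((ascPochhammer ℂ a).eval (2 * n + 3 - k : ℂ) *
          (descPochhammer ℂ j).eval (n + 4 - 2 * k : ℂ) * (descPochhammer ℂ i).eval (k : ℂ)) := by
  rcases lt_or_ge (n + 4) (2 * k) with hk | hk
  · exact ⟨0, fun l i a j _ hj ↦ by rw [coeff_X_pow_mul_P_eq_zero (by omega), zero_mul]⟩
  obtain ⟨m, hm⟩ : ∃ m, n + 4 = m + 2 * k := Nat.exists_eq_add_of_le' hk
  obtain ⟨N, hN⟩ : ∃ N, 2 * n + 2 = N + k := Nat.exists_eq_add_of_le' (by omega)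
  have m_eq : (n + 4 - 2 * k : ℂ) = m := by
    rw [sub_eq_iff_eq_add]; exact_mod_cast hm
  have N_succ_eq : (2 * n + 3 - k : ℂ) = (N + 1 : ℕ) := by
    rw [sub_eq_iff_eq_add]; norm_cast; omega
  refine ⟨N.factorial / (m.factorial * k.factorial), fun l i a j ha hj ↦ ?_⟩
  rw [coeff_X_pow_mul_P (N := N) (a := a) (m := m) (j := j) (by omega) (by omega), m_eq,
    N_succ_eq, ascPochhammer_nat_eq_natCast_ascFactorial,
    descPochhammer_eval_eq_descFactorial, descPochhammer_eval_eq_descFactorial]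

lemma coeff_P_recurrence (n k : ℕ) :
    -3 * (3 * n + 4) * (3 * n + 2) * (X ^ 2 * P n).coeff k
      - (2 * n + 3) * (9 * (X * P (n + 1)).coeff k + 2 * (P (n + 1)).coeff k)
      + (4 * (X * P (n + 2)).coeff k + (P (n + 2)).coeff k) = 0 := by
  obtain ⟨c, coeff_eq⟩ := exists_forall_coeff_X_pow_mul_P_eq n k
  set r : ℂ := 2 * n + 3 - k with r_eq
  set m : ℂ := n + 4 - 2 * k with m_eq
  have coeff_X_sq_mul_P₀ : (X ^ 2 * P n).coeff k = c * (k * (k - 1)) := by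
    simpa [descPochhammer_succ_eval] using coeff_eq n 2 0 0 (by ring) (by ring)
  have coeff_X_mul_P₁ : (X * P (n + 1)).coeff k = c * (r * m * k) := by
    simpa using coeff_eq (n + 1) 1 1 1 (by ring) (by ring)
  have coeff_P₁ : (P (n + 1)).coeff k = c * (m * (m - 1) * (m - 2)) := by
    simpa [descPochhammer_succ_eval] using coeff_eq (n + 1) 0 0 3 (by ring) (by ring)
  have coeff_X_mul_P₂ : (X * P (n + 2)).coeff k = c * (r * (r + 1) * (r + 2) * k) := by
    simpa [ascPochhammer_succ_eval] using coeff_eq (n + 2) 1 3 0 (by ring) (by ring)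
  have coeff_P₂ : (P (n + 2)).coeff k = c * (r * (r + 1) * (m * (m - 1))) := by
    simpa [ascPochhammer_succ_eval, descPochhammer_succ_eval] using
      coeff_eq (n + 2) 0 2 2 (by ring) (by ring)
  rw [coeff_X_sq_mul_P₀, coeff_X_mul_P₁, coeff_P₁, coeff_X_mul_P₂, coeff_P₂, r_eq, m_eq]
  ring

theorem stmt_13 (n : ℕ) :
    C (-3 * ((3 * n + 4 : ℕ) : ℂ) * ((3 * n + 2 : ℕ) : ℂ)) * X ^ 2 * P n
      - C (((2 * n + 3 : ℕ) : ℂ)) * (C (9 : ℂ) * X + C (2 : ℂ)) * P (n + 1)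
      + (C (4 : ℂ) * X + C (1 : ℂ)) * P (n + 2) = 0 := by
  ext k
  simp only [add_mul, C_1, one_mul, mul_assoc, coeff_add, coeff_sub, coeff_C_mul, coeff_zero]
  push_cast
  linear_combination coeff_P_recurrence n k
end

section
/- Let a = (a₁,a₂) and b = (b₁,b₂) be two distinct vectors in ℕ² and for n ∈ ℕ let P_{a,b,n}(X) = ∑_{k=0}^{n} ((a₁k + b₁(n−k))! · (a₂k + b₂(n−k))! / (k!·(n−k)!)) X^k ∈ ℂ[X]. Then for every n ≥ 1 the following are equivalent: (i) every polynomial f = μ₁X₁^{a₁}X₂^{a₂} + μ₂X₁^{b₁}X₂^{b₂} with μ₁, μ₂ ∈ ℂ satisfies: f = 0 or there exists k with n ≤ k ≤ n + N(f) − 1 such that 𝓛(f^k) ≠ 0; (ii) the polynomials P_{a,b,n}(X) and P_{a,b,n+1}(X) have no common zero in ℂ. -/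
open MvPolynomial Polynomial

/-- `P_{a,b,n}(X) = ∑_{k=0}^{n} ((a₁k + b₁(n−k))!·(a₂k + b₂(n−k))!/(k!(n−k)!)) Xᵏ`. -/
noncomputable def Pab (a b : ℕ × ℕ) (n : ℕ) : Polynomial ℂ :=
  ∑ k ∈ Finset.range (n + 1),
    Polynomial.C (((a.1 * k + b.1 * (n - k)).factorial : ℂ) *
        ((a.2 * k + b.2 * (n - k)).factorial : ℂ) /
       ((k.factorial : ℂ) * ((n - k).factorial : ℂ))) * Polynomial.X ^ k

/-! If `y ≠ 0`, expanding by the binomial theorem gives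
`𝓛((x X^α + y X^β)ᵏ) = k! yᵏ P_k(x / y)`, so the powers of a two-term polynomial are controlled by
the values of the `P_k` at the ratio of its coefficients. Two terms leave the exponents `n` and
`n + 1` only, hence a failure at level `n` is a common zero of `P_n` and `P_{n+1}`, the zero `z`
being realised by `z X^α + X^β`. This polynomial does have two terms, because
`n! P_n(0) = 𝓛(X^{nβ}) ≠ 0`. One-term polynomials never fail, as `𝓛` of a nonzero term is a nonzero
multiple of a product of factorials. -/

section Binomial

variable {σ R : Type*} [CommSemiring R] {α β : σ →₀ ℕ} {x y : R}

theorem support_monomial_add_monomial [DecidableEq σ] (hαβ : α ≠ β) (hx : x ≠ 0) (hy : y ≠ 0) :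
    (MvPolynomial.monomial α x + MvPolynomial.monomial β y).support = {α, β} :=
  Finsupp.support_single_add_single hαβ hx hy

theorem card_support_monomial_add_monomial (hαβ : α ≠ β) (hx : x ≠ 0) (hy : y ≠ 0) :
    (MvPolynomial.monomial α x + MvPolynomial.monomial β y).support.card = 2 := by
  classical rw [support_monomial_add_monomial hαβ hx hy, Finset.card_pair hαβ]

end Binomial

section FactorialMap

open scoped Nat

variable {m : ℕ}

/-- The factorial map as a linear map, given by its values on the monomial basis. -/
noncomputable def factLinearMap (m : ℕ) : MvPolynomial (Fin m) ℂ →ₗ[ℂ] ℂ :=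
  (MvPolynomial.basisMonomials (Fin m) ℂ).constr ℂ fun d => ∏ i, ((d i)! : ℂ)

theorem factLinearMap_apply (f : MvPolynomial (Fin m) ℂ) : factLinearMap m f = factMap m f :=
  Module.Basis.constr_apply ..

theorem factMap_sum {ι : Type*} (s : Finset ι) (f : ι → MvPolynomial (Fin m) ℂ) :
    factMap m (∑ i ∈ s, f i) = ∑ i ∈ s, factMap m (f i) := by
  simp only [← factLinearMap_apply, map_sum]

theorem factMap_monomial (d : Fin m →₀ ℕ) (c : ℂ) :
    factMap m (MvPolynomial.monomial d c) = c * ∏ i, ((d i)! : ℂ) := by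
  rw [← factLinearMap_apply, factLinearMap, Module.Basis.constr_apply]
  exact Finsupp.sum_single_index (zero_smul ℂ _)

theorem factMap_monomial_ne_zero (d : Fin m →₀ ℕ) {c : ℂ} (hc : c ≠ 0) :
    factMap m (MvPolynomial.monomial d c) ≠ 0 := by
  rw [factMap_monomial]
  exact mul_ne_zero hc
    (Finset.prod_ne_zero_iff.mpr fun i _ => Nat.cast_ne_zero.mpr (d i).factorial_ne_zero)

/-- `f` is in the `n`-th strong factorial set: it is zero, or one of the `N(f)` consecutive powers
`f ^ n, …, f ^ (n + N(f) - 1)` is not killed by the factorial map. The subtraction does not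
truncate where it matters, since `N(f) ≥ 1` when `f ≠ 0`. -/
def IsStrongFactorial (n : ℕ) (f : MvPolynomial (Fin m) ℂ) : Prop :=
  f = 0 ∨ ∃ k, n ≤ k ∧ k ≤ n + f.support.card - 1 ∧ factMap m (f ^ k) ≠ 0

theorem IsStrongFactorial.of_factMap_pow_ne_zero {n k : ℕ} {f : MvPolynomial (Fin m) ℂ}
    (hnk : n ≤ k) (hk : k < n + f.support.card) (h : factMap m (f ^ k) ≠ 0) :
    IsStrongFactorial n f :=
  Or.inr ⟨k, hnk, Nat.le_sub_one_of_lt hk, h⟩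

theorem isStrongFactorial_monomial (n : ℕ) (d : Fin m →₀ ℕ) (c : ℂ) :
    IsStrongFactorial n (MvPolynomial.monomial d c) := by
  classical
  rcases eq_or_ne c 0 with rfl | hc
  · exact Or.inl (map_zero _)
  · refine .of_factMap_pow_ne_zero le_rfl ?_ ?_
    · simp [MvPolynomial.support_monomial, hc]
    · rw [MvPolynomial.monomial_pow]
      exact factMap_monomial_ne_zero _ (pow_ne_zero n hc)

end FactorialMap

section BinomialFactorial

open scoped Nat

variable {m : ℕ}

/-- The polynomial `P_{α,β,n}` of a pair of exponent vectors in any number of variables: the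
dehomogenisation of `𝓛((x X^α + y X^β)ⁿ) / n!` at `y = 1`. -/
noncomputable def binomialFactPoly (α β : Fin m →₀ ℕ) (n : ℕ) : Polynomial ℂ :=
  ∑ k ∈ Finset.range (n + 1),
    Polynomial.C ((∏ i, (((k • α + (n - k) • β) i)! : ℂ)) / (k ! * (n - k)!)) * Polynomial.X ^ k

theorem factMap_monomial_add_monomial_pow (α β : Fin m →₀ ℕ) (x y : ℂ) (n : ℕ) :
    factMap m ((MvPolynomial.monomial α x + MvPolynomial.monomial β y) ^ n) =
      ∑ k ∈ Finset.range (n + 1),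
        x ^ k * y ^ (n - k) * n.choose k * ∏ i, (((k • α + (n - k) • β) i)! : ℂ) := by
  rw [add_pow, factMap_sum]
  refine Finset.sum_congr rfl fun k _ => ?_
  rw [MvPolynomial.monomial_pow, MvPolynomial.monomial_pow, MvPolynomial.monomial_mul,
    ← nsmul_eq_mul', ← map_nsmul, factMap_monomial, nsmul_eq_mul']

theorem factMap_monomial_add_monomial_pow_eq_eval (α β : Fin m →₀ ℕ) (x : ℂ) {y : ℂ} (hy : y ≠ 0)
    (n : ℕ) :
    factMap m ((MvPolynomial.monomial α x + MvPolynomial.monomial β y) ^ n) =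
      n ! * y ^ n * (binomialFactPoly α β n).eval (x / y) := by
  rw [factMap_monomial_add_monomial_pow, binomialFactPoly, Polynomial.eval_finsetSum,
    Finset.mul_sum]
  refine Finset.sum_congr rfl fun k hk => ?_
  have hkn : k ≤ n := Finset.mem_range_succ_iff.mp hk
  have hy_pow : y ^ n = y ^ (n - k) * y ^ k := (pow_sub_mul_pow y hkn).symm
  rw [Polynomial.eval_C_mul, Polynomial.eval_pow, Polynomial.eval_X, Nat.cast_choose ℂ hkn, hy_pow,
    div_pow]
  field_simp

theorem factMap_monomial_add_monomial_pow_ne_zero_iff (α β : Fin m →₀ ℕ) (x : ℂ) {y : ℂ}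
    (hy : y ≠ 0) (n : ℕ) :
    factMap m ((MvPolynomial.monomial α x + MvPolynomial.monomial β y) ^ n) ≠ 0 ↔
      (binomialFactPoly α β n).eval (x / y) ≠ 0 := by
  simp [factMap_monomial_add_monomial_pow_eq_eval α β x hy, hy, Nat.factorial_ne_zero]

theorem eval_zero_binomialFactPoly_ne_zero (α β : Fin m →₀ ℕ) (n : ℕ) :
    (binomialFactPoly α β n).eval 0 ≠ 0 := by
  have hpow : factMap m ((MvPolynomial.monomial α 0 + MvPolynomial.monomial β 1) ^ n) ≠ 0 := by
    rw [map_zero, zero_add, MvPolynomial.monomial_pow]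
    exact factMap_monomial_ne_zero _ (pow_ne_zero n one_ne_zero)
  simpa only [zero_div] using
    (factMap_monomial_add_monomial_pow_ne_zero_iff α β 0 one_ne_zero n).mp hpow

theorem isStrongFactorial_monomial_add_monomial_iff {α β : Fin m →₀ ℕ} (hαβ : α ≠ β) (n : ℕ)
    {x y : ℂ} (hx : x ≠ 0) (hy : y ≠ 0) :
    IsStrongFactorial n (MvPolynomial.monomial α x + MvPolynomial.monomial β y) ↔
      (binomialFactPoly α β n).eval (x / y) ≠ 0 ∨
        (binomialFactPoly α β (n + 1)).eval (x / y) ≠ 0 := by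
  have hcard := card_support_monomial_add_monomial hαβ hx hy
  simp only [← factMap_monomial_add_monomial_pow_ne_zero_iff α β x hy]
  constructor
  · rintro (hzero | ⟨k, hnk, hk, hpow⟩)
    · simp [hzero] at hcard
    · obtain rfl | rfl : k = n ∨ k = n + 1 := by lia
      exacts [Or.inl hpow, Or.inr hpow]
  · rintro (hpow | hpow)
    · exact .of_factMap_pow_ne_zero le_rfl (by lia) hpow
    · exact .of_factMap_pow_ne_zero n.le_succ (by lia) hpow

theorem stmt_16_general {α β : Fin m →₀ ℕ} (hαβ : α ≠ β) (n : ℕ) :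
    (∀ x y : ℂ, IsStrongFactorial n (MvPolynomial.monomial α x + MvPolynomial.monomial β y)) ↔
      ¬ ∃ z : ℂ, (binomialFactPoly α β n).eval z = 0 ∧
        (binomialFactPoly α β (n + 1)).eval z = 0 := by
  constructor
  · rintro h ⟨z, hz, hz_succ⟩
    have hz_ne : z ≠ 0 := by
      rintro rfl
      exact eval_zero_binomialFactPoly_ne_zero α β n hz
    have hz_or := (isStrongFactorial_monomial_add_monomial_iff hαβ n hz_ne one_ne_zero).mp (h z 1)
    simp [hz, hz_succ] at hz_or
  · intro h x y
    rcases eq_or_ne x 0 with rfl | hx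
    · simpa only [map_zero, zero_add] using isStrongFactorial_monomial n β y
    rcases eq_or_ne y 0 with rfl | hy
    · simpa only [map_zero, add_zero] using isStrongFactorial_monomial n α x
    · rw [isStrongFactorial_monomial_add_monomial_iff hαβ n hx hy]
      exact not_and_or.mp fun hz => h ⟨x / y, hz⟩

end BinomialFactorial

section TwoVariables

/-- The exponent vector in two variables with entries `a.1` and `a.2`. -/
noncomputable def pairExponent (a : ℕ × ℕ) : Fin 2 →₀ ℕ :=
  Finsupp.single 0 a.1 + Finsupp.single 1 a.2

theorem pairExponent_zero (a : ℕ × ℕ) : pairExponent a 0 = a.1 := by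
  simp [pairExponent]

theorem pairExponent_one (a : ℕ × ℕ) : pairExponent a 1 = a.2 := by
  simp [pairExponent]

theorem pairExponent_injective : Function.Injective pairExponent := fun a b h =>
  Prod.ext (by simpa only [pairExponent_zero] using DFunLike.congr_fun h 0)
    (by simpa only [pairExponent_one] using DFunLike.congr_fun h 1)

theorem C_mul_X_pow_mul_X_pow_eq_monomial {R : Type*} [CommSemiring R] (a : ℕ × ℕ) (c : R) :
    (MvPolynomial.C c * MvPolynomial.X 0 ^ a.1 * MvPolynomial.X 1 ^ a.2 :
      MvPolynomial (Fin 2) R) = MvPolynomial.monomial (pairExponent a) c := by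
  simp [pairExponent, MvPolynomial.X_pow_eq_monomial, MvPolynomial.C_mul_monomial,
    MvPolynomial.monomial_mul]

theorem Pab_eq_binomialFactPoly (a b : ℕ × ℕ) (n : ℕ) :
    Pab a b n = binomialFactPoly (pairExponent a) (pairExponent b) n := by
  simp only [Pab, binomialFactPoly, Fin.prod_univ_two, Finsupp.add_apply, Finsupp.smul_apply,
    pairExponent_zero, pairExponent_one, smul_eq_mul, mul_comm]

end TwoVariables

theorem stmt_16 (a b : ℕ × ℕ) (hab : a ≠ b) (n : ℕ) (hn : 1 ≤ n) :
    (∀ μ₁ μ₂ : ℂ,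
        (MvPolynomial.C μ₁ * MvPolynomial.X 0 ^ a.1 * MvPolynomial.X 1 ^ a.2 +
          MvPolynomial.C μ₂ * MvPolynomial.X 0 ^ b.1 * MvPolynomial.X 1 ^ b.2 :
            MvPolynomial (Fin 2) ℂ) = 0 ∨
        ∃ k : ℕ, n ≤ k ∧
          k ≤ n + (MvPolynomial.C μ₁ * MvPolynomial.X 0 ^ a.1 * MvPolynomial.X 1 ^ a.2 +
              MvPolynomial.C μ₂ * MvPolynomial.X 0 ^ b.1 * MvPolynomial.X 1 ^ b.2 :
                MvPolynomial (Fin 2) ℂ).support.card - 1 ∧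
          factMap 2 ((MvPolynomial.C μ₁ * MvPolynomial.X 0 ^ a.1 * MvPolynomial.X 1 ^ a.2 +
              MvPolynomial.C μ₂ * MvPolynomial.X 0 ^ b.1 * MvPolynomial.X 1 ^ b.2) ^ k) ≠ 0)
    ↔ ¬ ∃ x : ℂ, (Pab a b n).eval x = 0 ∧ (Pab a b (n + 1)).eval x = 0 := by
  simp only [C_mul_X_pow_mul_X_pow_eq_monomial, Pab_eq_binomialFactPoly]
  exact stmt_16_general (pairExponent_injective.ne hab) n
end
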